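/- For every real number y, −(1/45)·cos(3y) + (3/10)·cos(2y) − 3·cos(y) + 49/18 ≤ y². Equivalently, for every h > 0 and every real ξ, the sixth-order discrete Laplacian symbol satisfies ψ_h^{(6)}(ξ) ≤ ξ². -/

import Mathlib

/-- Discrete symbol of the sixth-order (p = 6) central finite difference
approximation of `-d²/dx²`. -/
noncomputable def psi6 (h ξ : ℝ) : ℝ :=
  (-(1/45) * Real.cos (3*ξ*h) + (3/10) * Real.cos (2*ξ*h) - 3 * Real.cos (ξ*h) + 49/18) / h^2

/-!
Write `u = 2 - 2 cos y` for the symbol of the second-order difference. The symbol of order `2n` is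
the polynomial `S n = ∑ 2 uᵏ / (k² C(2k, k))`, `1 ≤ k ≤ n`, in `u`, a truncation of the series for
`y² = 4 arcsin² (√u / 2)`, `|y| ≤ π`. From `u'² = u (4 - u)` and `u'' = 2 - u`, the second
derivative of each term is a difference of consecutive values of `2 uᵏ / C(2k, k)`. The sum
telescopes to `(S n)'' = 2 - 2 uⁿ / C(2n, n) ≤ 2`, while `S n` and its first derivative vanish at
`0`, so `S n ≤ y²`. The symbol of the theorem is `S 3`.
-/

open Finset Real

theorem le_quadratic_of_hasDerivAt2_le {f f' f'' : ℝ → ℝ} {M : ℝ}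
    (hf : ∀ x, HasDerivAt f (f' x) x) (hf' : ∀ x, HasDerivAt f' (f'' x) x)
    (hM : ∀ x, f'' x ≤ M) (a x : ℝ) :
    f x ≤ f a + f' a * (x - a) + M / 2 * (x - a) ^ 2 := by
  let gap := fun t ↦ f a + f' a * (t - a) + M / 2 * (t - a) ^ 2 - f t
  have hgap (t : ℝ) : HasDerivAt gap (f' a + M * (t - a) - f' t) t := by
    have hlin := (hasDerivAt_id' t).sub_const a
    refine ((((hlin.const_mul (f' a)).const_add (f a)).add
      ((hlin.pow 2).const_mul (M / 2))).sub (hf t)).congr_deriv ?_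
    ring
  have hgap' (t : ℝ) : HasDerivAt (fun t ↦ f' a + M * (t - a) - f' t) (M - f'' t) t := by
    have hlin := (hasDerivAt_id' t).sub_const a
    refine (((hlin.const_mul M).const_add (f' a)).sub (hf' t)).congr_deriv ?_
    ring
  have hconvex : ConvexOn ℝ Set.univ gap :=
    convexOn_of_hasDerivWithinAt2_nonneg convex_univ
      (fun t _ ↦ (hgap t).continuousAt.continuousWithinAt)
      (fun t _ ↦ (hgap t).hasDerivWithinAt) (fun t _ ↦ (hgap' t).hasDerivWithinAt)
      (fun t _ ↦ sub_nonneg.2 (hM t))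
  have hcritical : derivWithin gap (Set.Ioi a) a = 0 := by
    simpa using (hgap a).hasDerivWithinAt.derivWithin (uniqueDiffWithinAt_Ioi a)
  have hmin : gap a ≤ gap x :=
    hconvex.isMinOn_of_rightDeriv_eq_zero (by simp) hcritical (Set.mem_univ x)
  simpa [gap] using hmin

theorem two_sub_two_mul_cos_nonneg (y : ℝ) : 0 ≤ 2 - 2 * cos y := by
  linarith [cos_le_one y]

theorem hasDerivAt_two_sub_two_mul_cos (y : ℝ) :
    HasDerivAt (fun y ↦ 2 - 2 * cos y) (2 * sin y) y := by
  simpa using ((hasDerivAt_cos y).const_mul 2).const_sub 2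

theorem hasDerivAt_two_sub_two_mul_cos_pow_succ (k : ℕ) (y : ℝ) :
    HasDerivAt (fun y ↦ (2 - 2 * cos y) ^ (k + 1))
      (2 * (k + 1) * (2 - 2 * cos y) ^ k * sin y) y := by
  refine ((hasDerivAt_two_sub_two_mul_cos y).pow (k + 1)).congr_deriv ?_
  push_cast [Nat.add_sub_cancel]
  ring

theorem hasDerivAt_two_sub_two_mul_cos_pow_mul_sin (k : ℕ) (y : ℝ) :
    HasDerivAt (fun y ↦ (2 - 2 * cos y) ^ k * sin y)
      ((2 * k + 1) * (2 - 2 * cos y) ^ k - (k + 1) / 2 * (2 - 2 * cos y) ^ (k + 1)) y := by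
  cases k with
  | zero => simpa using (hasDerivAt_sin y).congr_deriv (by ring)
  | succ k =>
    refine ((hasDerivAt_two_sub_two_mul_cos_pow_succ k y).mul (hasDerivAt_sin y)).congr_deriv ?_
    push_cast
    linear_combination 2 * (k + 1) * (2 - 2 * cos y) ^ k * sin_sq_add_cos_sq y

/-- The symbol, at mesh size `1`, of the central difference approximation of order `2 * n` of
`-d²/dx²`, written as a polynomial in the second-order symbol `2 - 2 * cos y`. The index `k` of the
sum stands for the power `k + 1`. -/
noncomputable def centralDifferenceSymbol (n : ℕ) (y : ℝ) : ℝ :=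
  ∑ k ∈ range n, 2 / ((k + 1) ^ 2 * (k + 1).centralBinom) * (2 - 2 * cos y) ^ (k + 1)

namespace centralDifferenceSymbol

theorem apply_zero (n : ℕ) : centralDifferenceSymbol n 0 = 0 := by
  simp [centralDifferenceSymbol]

theorem hasDerivAt (n : ℕ) (y : ℝ) :
    HasDerivAt (centralDifferenceSymbol n)
      (∑ k ∈ range n,
        4 / ((k + 1) * (k + 1).centralBinom) * ((2 - 2 * cos y) ^ k * sin y)) y := by
  refine HasDerivAt.fun_sum fun k _ ↦
    ((hasDerivAt_two_sub_two_mul_cos_pow_succ k y).const_mul _).congr_deriv ?_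
  field_simp
  ring

theorem hasDerivAt_deriv (n : ℕ) (y : ℝ) :
    HasDerivAt
      (fun y ↦ ∑ k ∈ range n,
        4 / ((k + 1) * (k + 1).centralBinom) * ((2 - 2 * cos y) ^ k * sin y))
      (2 - 2 * (2 - 2 * cos y) ^ n / n.centralBinom) y := by
  let g := fun k : ℕ ↦ 2 * (2 - 2 * cos y) ^ k / k.centralBinom
  have hterm (k : ℕ) :
      4 / ((k + 1) * (k + 1).centralBinom) *
        ((2 * k + 1) * (2 - 2 * cos y) ^ k - (k + 1) / 2 * (2 - 2 * cos y) ^ (k + 1)) =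
      g k - g (k + 1) := by
    have hrec : ((k : ℝ) + 1) * (k + 1).centralBinom = 2 * (2 * k + 1) * k.centralBinom := by
      exact_mod_cast k.succ_mul_centralBinom_succ
    have hk : (k.centralBinom : ℝ) ≠ 0 := mod_cast k.centralBinom_ne_zero
    have hk' : ((k + 1).centralBinom : ℝ) ≠ 0 := mod_cast (k + 1).centralBinom_ne_zero
    simp only [g]
    field_simp
    linear_combination -4 * (2 - 2 * cos y) ^ k * hrec
  have htelescope : ∑ k ∈ range n, (g k - g (k + 1)) =
      2 - 2 * (2 - 2 * cos y) ^ n / n.centralBinom := by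
    rw [sum_range_sub']
    simp [g]
  rw [← htelescope]
  exact HasDerivAt.fun_sum fun k _ ↦
    ((hasDerivAt_two_sub_two_mul_cos_pow_mul_sin k y).const_mul _).congr_deriv (hterm k)

theorem le_sq (n : ℕ) (y : ℝ) : centralDifferenceSymbol n y ≤ y ^ 2 := by
  have hbound (x : ℝ) : 2 - 2 * (2 - 2 * cos x) ^ n / n.centralBinom ≤ 2 := by
    have := two_sub_two_mul_cos_nonneg x
    exact sub_le_self _ (by positivity)
  simpa [apply_zero] using
    le_quadratic_of_hasDerivAt2_le (hasDerivAt n) (hasDerivAt_deriv n) hbound 0 y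

theorem three_eq (y : ℝ) :
    centralDifferenceSymbol 3 y =
      -(1 / 45) * cos (3 * y) + 3 / 10 * cos (2 * y) - 3 * cos y + 49 / 18 := by
  have hbinom : Nat.centralBinom 1 = 2 ∧ Nat.centralBinom 2 = 6 ∧ Nat.centralBinom 3 = 20 := by
    decide
  rw [cos_three_mul, cos_two_mul]
  simp only [centralDifferenceSymbol, sum_range_succ, sum_range_zero, Nat.reduceAdd, hbinom]
  push_cast
  ring

end centralDifferenceSymbol

theorem psi6_eq_centralDifferenceSymbol_div (h ξ : ℝ) :
    psi6 h ξ = centralDifferenceSymbol 3 (ξ * h) / h ^ 2 := by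
  simp only [psi6, centralDifferenceSymbol.three_eq, mul_assoc]

/-- For every real `y`, `−(1/45)cos(3y) + (3/10)cos(2y) − 3cos(y) + 49/18 ≤ y²`;
equivalently, for every `h > 0` and real `ξ`, the sixth-order discrete Laplacian
symbol satisfies `ψ_h^{(6)}(ξ) ≤ ξ²`. -/
theorem sixth_order_symbol_upper_bound :
    (∀ y : ℝ, -(1/45) * Real.cos (3*y) + (3/10) * Real.cos (2*y) - 3 * Real.cos y + 49/18 ≤ y^2) ∧
    (∀ h : ℝ, 0 < h → ∀ ξ : ℝ, psi6 h ξ ≤ ξ^2) := by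
  refine ⟨fun y ↦ ?_, fun h hh ξ ↦ ?_⟩
  · rw [← centralDifferenceSymbol.three_eq]
    exact centralDifferenceSymbol.le_sq 3 y
  · rw [psi6_eq_centralDifferenceSymbol_div, div_le_iff₀ (by positivity), ← mul_pow]
    exact centralDifferenceSymbol.le_sq 3 (ξ * h)
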